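/- arXiv:1903.12154 — 2 statements merged into one kernel-verified Lean document; each statement's English description precedes it below -/
import Mathlib

section
/- Strong secrecy implies trace-norm security: let K and T be finite sets with |K| >= 2, let Pbar be a probability distribution on K x K x K x T with coordinates (S_A, S_B, S, T), and let P be its marginal on (S_A, S_B, T). Suppose: Pr[S_A = S_B = S] := sum over (s,t) of Pbar(s,s,s,t) >= 1 - epsilon; I(S : T)_{Pbar} <= epsilon; the marginal of S is uniform, i.e. the S-marginal of Pbar equals 1/|K| at every point of K; and 0 <= epsilon <= 1/2. Define P^ideal(s_A,s_B,t) := (delta_{s_A,s_B}/|K|) * P_T(t), where P_T is the T-marginal of P and delta is the Kronecker delta. Then (1/2) * sum over (s_A,s_B,t) of | P(s_A,s_B,t) - P^ideal(s_A,s_B,t) | <= (1/sqrt(2)) * sqrt( epsilon + h(epsilon) + epsilon * log2(|K| - 1) ) + 2*epsilon. -/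
/-- Shannon entropy (base-2) of a finitely supported real-valued distribution. -/
noncomputable def shannonEnt {α : Type} [Fintype α] (p : α → ℝ) : ℝ :=
  -∑ a, p a * Real.logb 2 (p a)

/-- Shannon mutual information (base-2) of a joint distribution on `α × β`. -/
noncomputable def mutInfo {α β : Type} [Fintype α] [Fintype β] (R : α → β → ℝ) : ℝ :=
  shannonEnt (fun a => ∑ b, R a b) + shannonEnt (fun b => ∑ a, R a b) -
    shannonEnt (fun p : α × β => R p.1 p.2)

/-- The binary Shannon entropy `h(ε) = -ε log₂ ε - (1-ε) log₂ (1-ε)` (with `h(0)=0`). -/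
noncomputable def binEnt (x : ℝ) : ℝ :=
  -(x * Real.logb 2 x) - (1 - x) * Real.logb 2 (1 - x)

lemma pinsker_aux (x : ℝ) (hx : 0 < x) :
    3 * (x - 1)^2 ≤ (2*x+4) * (x * Real.log x - x + 1) := by
  set f : ℝ → ℝ := fun x => (2*x+4) * (x * Real.log x - x + 1) - 3 * (x - 1)^2 with hf
  have hd : ∀ y, 0 < y → HasDerivAt f ((4*y+4) * Real.log y - 8*(y-1)) y := by
    intro y hy
    have h1 := ((((hasDerivAt_id y).const_mul 2).add_const 4).mul
      ((((hasDerivAt_id y).mul (Real.hasDerivAt_log hy.ne')).sub (hasDerivAt_id y)).add_const 1)).sub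
      ((((hasDerivAt_id y).sub_const 1).pow 2).const_mul 3)
    refine h1.congr_deriv ?_
    simp
    field_simp
    ring
  have hlog : ∀ y, 1 ≤ y → 8*(y-1) ≤ (4*y+4) * Real.log y := by
    intro y hy
    have := Real.le_log_one_add_of_nonneg (x := y-1) (by linarith)
    rw [show 1 + (y-1) = y by ring, div_le_iff₀ (by linarith)] at this
    nlinarith
  have hlog2 : ∀ y, 0 < y → y ≤ 1 → (4*y+4) * Real.log y ≤ 8*(y-1) := by
    intro y hy hy1
    have := hlog y⁻¹ ((one_le_inv₀ hy).2 hy1)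
    rw [Real.log_inv] at this
    have h2 := mul_le_mul_of_nonneg_left this hy.le
    have e : y * y⁻¹ = 1 := mul_inv_cancel₀ hy.ne'
    have e1 : y * (8 * (y⁻¹ - 1)) = 8 * (1 - y) := by linear_combination 8 * e
    have e2 : y * ((4 * y⁻¹ + 4) * -Real.log y) = -((4*y+4) * Real.log y) := by
      linear_combination -4 * Real.log y * e
    rw [e1, e2] at h2
    linarith
  have h1 : f 1 = 0 := by simp [hf]
  suffices 0 ≤ f x by simp only [hf] at this; linarith
  rcases le_total x 1 with h | h
  · have : AntitoneOn f (Set.Icc x 1) := by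
      apply antitoneOn_of_deriv_nonpos (convex_Icc x 1)
      · intro y hy; exact (hd y (lt_of_lt_of_le hx hy.1)).continuousAt.continuousWithinAt
      · intro y hy
        rw [interior_Icc] at hy
        exact (hd y (hx.trans hy.1)).differentiableAt.differentiableWithinAt
      · intro y hy
        rw [interior_Icc] at hy
        rw [(hd y (hx.trans hy.1)).deriv]
        linarith [hlog2 y (hx.trans hy.1) hy.2.le]
    rw [← h1]
    exact this ⟨le_rfl, h⟩ ⟨h, le_rfl⟩ h
  · have : MonotoneOn f (Set.Icc 1 x) := by
      apply monotoneOn_of_deriv_nonneg (convex_Icc 1 x)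
      · intro y hy; exact (hd y (lt_of_lt_of_le one_pos hy.1)).continuousAt.continuousWithinAt
      · intro y hy
        rw [interior_Icc] at hy
        exact (hd y (one_pos.trans hy.1)).differentiableAt.differentiableWithinAt
      · intro y hy
        rw [interior_Icc] at hy
        rw [(hd y (one_pos.trans hy.1)).deriv]
        linarith [hlog y hy.1.le]
    rw [← h1]
    exact this ⟨le_rfl, h⟩ ⟨h, le_rfl⟩ h

lemma pinsker_pt (p q : ℝ) (hp : 0 ≤ p) (hq : 0 ≤ q) (hpq : q = 0 → p = 0) :
    3 * (p - q)^2 ≤ (2*p+4*q) * (p * (Real.log p - Real.log q) - p + q) := by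
  rcases hq.eq_or_lt with h | h
  · have := hpq h.symm
    subst this; subst h; simp
  rcases hp.eq_or_lt with h' | h'
  · subst h'; simp; nlinarith
  have := pinsker_aux (p/q) (div_pos h' h)
  rw [Real.log_div h'.ne' h.ne'] at this
  have h2 := mul_le_mul_of_nonneg_left this (sq_nonneg q)
  have e : q * (p / q) = p := by field_simp
  generalize p / q = z at *
  subst e
  linarith

lemma pinsker_fin {ι : Type} [Fintype ι] (p q : ι → ℝ) (hp : ∀ i, 0 ≤ p i) (hq : ∀ i, 0 ≤ q i)
    (hpq : ∀ i, q i = 0 → p i = 0) (hp1 : ∑ i, p i = 1) (hq1 : ∑ i, q i = 1) :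
    (∑ i, |p i - q i|)^2 ≤ 2 * ∑ i, p i * (Real.log (p i) - Real.log (q i)) := by
  have hpt := fun i => pinsker_pt (p i) (q i) (hp i) (hq i) (hpq i)
  have hd : ∀ i, 0 ≤ p i * (Real.log (p i) - Real.log (q i)) - p i + q i := by
    intro i
    rcases (hq i).eq_or_lt with h | h
    · rw [← h, hpq i h.symm]; simp
    · by_contra hc
      push Not at hc
      have h1 : 0 < 2 * p i + 4 * q i := by linarith [hp i]
      nlinarith [hpt i, mul_neg_of_pos_of_neg h1 hc, sq_nonneg (p i - q i)]
  have cs := Finset.sum_sq_le_sum_mul_sum_of_sq_le_mul Finset.univ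
    (r := fun i => |p i - q i|) (f := fun i => (2 * p i + 4 * q i)/3)
    (g := fun i => p i * (Real.log (p i) - Real.log (q i)) - p i + q i)
    (fun i _ => by have := hp i; have := hq i; positivity) (fun i _ => hd i)
    (fun i _ => by rw [sq_abs]; linarith [hpt i])
  refine cs.trans (le_of_eq ?_)
  rw [← Finset.sum_div, Finset.sum_add_distrib, Finset.sum_add_distrib, Finset.sum_sub_distrib,
    ← Finset.mul_sum, ← Finset.mul_sum, hp1, hq1]
  ring

lemma mutInfo_pinsker {α β : Type} [Fintype α] [Fintype β] (R : α → β → ℝ)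
    (hR : ∀ a b, 0 ≤ R a b) (h1 : ∑ a, ∑ b, R a b = 1) :
    (∑ a, ∑ b, |R a b - (∑ b', R a b') * (∑ a', R a' b)|)^2 ≤ 2 * (Real.log 2 * mutInfo R) := by
  have ha : ∀ a b, R a b ≤ ∑ b', R a b' := fun a b =>
    Finset.single_le_sum (f := fun b => R a b) (fun b _ => hR a b) (Finset.mem_univ b)
  have hb : ∀ a b, R a b ≤ ∑ a', R a' b := fun a b =>
    Finset.single_le_sum (f := fun a => R a b) (fun a _ => hR a b) (Finset.mem_univ a)
  have h1' : ∑ b, ∑ a, R a b = 1 := by rw [Finset.sum_comm]; exact h1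
  have key := pinsker_fin (fun x : α × β => R x.1 x.2)
    (fun x => (∑ b', R x.1 b') * (∑ a', R a' x.2)) (fun x => hR _ _)
    (fun x => mul_nonneg ((hR _ _).trans (ha x.1 x.2)) ((hR _ _).trans (hb x.1 x.2)))
    (by
      rintro ⟨a, b⟩ h
      rcases mul_eq_zero.1 h with h | h
      · exact le_antisymm (h ▸ ha a b) (hR a b)
      · exact le_antisymm (h ▸ hb a b) (hR a b))
    (by rw [Fintype.sum_prod_type]; exact h1)
    (by
      rw [Fintype.sum_prod_type]
      simp only [← Finset.mul_sum, h1', mul_one]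
      exact h1)
  rw [Fintype.sum_prod_type] at key
  refine key.trans (le_of_eq ?_)
  congr 1
  have hl : Real.log 2 ≠ 0 := (Real.log_pos (by norm_num)).ne'
  have hlb : ∀ x, Real.logb 2 x = Real.log x / Real.log 2 := fun x => rfl
  have e : Real.log 2 * mutInfo R = ∑ a, ∑ b, R a b * Real.log (R a b)
      - ∑ a, (∑ b, R a b) * Real.log (∑ b, R a b) - ∑ b, (∑ a, R a b) * Real.log (∑ a, R a b) := by
    simp only [mutInfo, shannonEnt, hlb, Fintype.sum_prod_type, ← mul_div_assoc, ← Finset.sum_div]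
    field_simp
    ring
  rw [e, Fintype.sum_prod_type]
  simp only [Finset.sum_mul]
  rw [Finset.sum_comm (s := (Finset.univ : Finset β)), ← Finset.sum_sub_distrib,
    ← Finset.sum_sub_distrib]
  refine Finset.sum_congr rfl fun a _ => ?_
  rw [← Finset.sum_sub_distrib, ← Finset.sum_sub_distrib]
  refine Finset.sum_congr rfl fun b _ => ?_
  rcases (hR a b).eq_or_lt with h | h
  · simp [← h]
  · rw [← Finset.sum_mul]
    rw [Real.log_mul (h.trans_le (ha a b)).ne' (h.trans_le (hb a b)).ne']
    ring

/-- Strong secrecy implies trace-norm security: if `Pbar` is a distribution on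
`K × K × K × T` with coordinates `(S_A, S_B, S, T)` such that `Pr[S_A = S_B = S] ≥ 1-ε`,
`I(S:T) ≤ ε`, the marginal of `S` is uniform and `0 ≤ ε ≤ 1/2`, then the marginal `P`
of `Pbar` on `(S_A, S_B, T)` is `(1/√2)·√(ε + h(ε) + ε·log₂(|K|-1)) + 2ε`-close in
variational distance to the ideal distribution
`P^ideal(s_A,s_B,t) = (δ_{s_A,s_B}/|K|)·P_T(t)`. -/
theorem strong_secrecy_implies_security {K T : Type} [Fintype K] [Fintype T]
    [DecidableEq K] (hK : 2 ≤ Fintype.card K)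
    (Pbar : K → K → K → T → ℝ)
    (hnonneg : ∀ sA sB s t, 0 ≤ Pbar sA sB s t)
    (hsum : ∑ sA, ∑ sB, ∑ s, ∑ t, Pbar sA sB s t = 1)
    (ε : ℝ) (hε0 : 0 ≤ ε) (hε : ε ≤ 1/2)
    (hcor : 1 - ε ≤ ∑ s, ∑ t, Pbar s s s t)
    (hI : mutInfo (fun s t => ∑ sA, ∑ sB, Pbar sA sB s t) ≤ ε)
    (hunif : ∀ s, ∑ sA, ∑ sB, ∑ t, Pbar sA sB s t = 1 / (Fintype.card K : ℝ))
    (P : K → K → T → ℝ)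
    (hPdef : ∀ sA sB t, P sA sB t = ∑ s, Pbar sA sB s t) :
    (1/2) * ∑ sA, ∑ sB, ∑ t,
        |P sA sB t -
          (if sA = sB then 1 / (Fintype.card K : ℝ) else 0) *
            (∑ sA', ∑ sB', P sA' sB' t)| ≤
      (1 / Real.sqrt 2) *
          Real.sqrt (ε + binEnt ε + ε * Real.logb 2 ((Fintype.card K : ℝ) - 1)) +
        2 * ε := by
  set N : ℝ := (Fintype.card K : ℝ) with hN
  have hN2 : (2:ℝ) ≤ N := by rw [hN]; exact_mod_cast hK
  set R : K → T → ℝ := fun s t => ∑ sA, ∑ sB, Pbar sA sB s t with hRdef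
  have hR0 : ∀ s t, 0 ≤ R s t := fun s t =>
    Finset.sum_nonneg fun a _ => Finset.sum_nonneg fun b _ => hnonneg a b s t
  have hRa : ∀ s, ∑ t, R s t = 1 / N := by
    intro s
    rw [← hunif s]
    simp only [hRdef]
    rw [Finset.sum_comm]
    refine Finset.sum_congr rfl fun a _ => ?_
    rw [Finset.sum_comm]
  have hR1 : ∑ s, ∑ t, R s t = 1 := by
    simp only [hRa, Finset.sum_const, Finset.card_univ, nsmul_eq_mul, ← hN]
    field_simp
  have hRb : ∀ t, ∑ sA', ∑ sB', P sA' sB' t = ∑ s, R s t := by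
    intro t
    simp only [hPdef, hRdef]
    rw [Finset.sum_comm (s := (Finset.univ : Finset K)) (t := (Finset.univ : Finset K))
      (f := fun s a => ∑ b, Pbar a b s t)]
    refine Finset.sum_congr rfl fun a _ => ?_
    rw [Finset.sum_comm]
  have hP1 : ∑ sA, ∑ sB, ∑ t, P sA sB t = 1 := by
    rw [← hsum]
    refine Finset.sum_congr rfl fun a _ => Finset.sum_congr rfl fun b _ => ?_
    simp only [hPdef]
    rw [Finset.sum_comm]
  have hpin := mutInfo_pinsker R hR0 hR1
  simp only [hRa] at hpin
  set V := ∑ a, ∑ t, |R a t - 1 / N * ∑ a', R a' t| with hV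
  -- bound on the variational distance
  have hpt : ∀ a b t, |P a b t - (if a = b then 1 / N else 0) * (∑ sA', ∑ sB', P sA' sB' t)| ≤
      P a b t + (if a = b then R a t - 2 * Pbar a a a t + |R a t - 1 / N * ∑ a', R a' t|
        else 0) := by
    intro a b t
    rw [hRb]
    have hP0 : Pbar a b a t ≤ P a b t := by
      rw [hPdef]
      exact Finset.single_le_sum (f := fun s => Pbar a b s t) (fun s _ => hnonneg a b s t)
        (Finset.mem_univ a)
    split_ifs with h
    · subst h
      have hR' : Pbar a a a t ≤ R a t :=
        (Finset.single_le_sum (f := fun y => Pbar a y a t) (fun s _ => hnonneg a s a t)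
          (Finset.mem_univ a)).trans
        (Finset.single_le_sum (f := fun x => ∑ y, Pbar x y a t)
          (fun x _ => Finset.sum_nonneg fun y _ => hnonneg x y a t) (Finset.mem_univ a))
      have h1 : |P a a t - R a t| ≤ P a a t + R a t - 2 * Pbar a a a t := by
        rw [abs_le]; constructor <;> linarith
      have := abs_sub_le (P a a t) (R a t) (1 / N * ∑ a', R a' t)
      linarith
    · have := (hnonneg a b a t).trans hP0
      simp [abs_of_nonneg this]
  have hbound : ∑ sA, ∑ sB, ∑ t,
        |P sA sB t - (if sA = sB then 1 / N else 0) * (∑ sA', ∑ sB', P sA' sB' t)| ≤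
      2 * ε + V := by
    calc _ ≤ ∑ a, ∑ b, ∑ t, (P a b t +
          (if a = b then R a t - 2 * Pbar a a a t + |R a t - 1 / N * ∑ a', R a' t| else 0)) :=
          Finset.sum_le_sum fun a _ => Finset.sum_le_sum fun b _ => Finset.sum_le_sum fun t _ =>
            hpt a b t
      _ = 1 + ∑ a, ∑ t, (R a t - 2 * Pbar a a a t + |R a t - 1 / N * ∑ a', R a' t|) := by
          simp only [Finset.sum_add_distrib (f := fun t => P _ _ t)]
          simp only [Finset.sum_add_distrib (f := fun b => ∑ t, P _ b t)]
          rw [Finset.sum_add_distrib, hP1]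
          congr 1
          refine Finset.sum_congr rfl fun a _ => ?_
          rw [Finset.sum_comm]
          refine Finset.sum_congr rfl fun t _ => ?_
          simp
      _ = 1 + (1 - 2 * ∑ s, ∑ t, Pbar s s s t + V) := by
          simp only [Finset.sum_add_distrib, Finset.sum_sub_distrib, ← Finset.mul_sum, hR1, hV]
      _ ≤ _ := by linarith
  have hl2 : Real.log 2 ≤ 1 := by linarith [Real.log_two_lt_d9]
  have hl0 : 0 < Real.log 2 := Real.log_pos (by norm_num)
  have hV2 : V ^ 2 ≤ 2 * ε := by
    have h1 : Real.log 2 * mutInfo R ≤ Real.log 2 * ε := mul_le_mul_of_nonneg_left hI hl0.le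
    nlinarith
  have hent : 0 ≤ binEnt ε := by
    have h1 : Real.logb 2 ε ≤ 0 := Real.logb_nonpos (by norm_num) hε0 (by linarith)
    have h2 : Real.logb 2 (1 - ε) ≤ 0 :=
      Real.logb_nonpos (by norm_num) (by linarith) (by linarith)
    unfold binEnt
    nlinarith
  have hlog : 0 ≤ ε * Real.logb 2 (N - 1) :=
    mul_nonneg hε0 (Real.logb_nonneg (by norm_num) (by linarith))
  have hfin : V / 2 ≤ (1 / Real.sqrt 2) *
      Real.sqrt (ε + binEnt ε + ε * Real.logb 2 (N - 1)) := by
    rw [one_div, ← Real.sqrt_inv, ← Real.sqrt_mul (by norm_num)]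
    apply Real.le_sqrt_of_sq_le
    nlinarith
  linarith
end

section
/- Dice mutual-information identity: let P be a bipartite non-signaling device over finite sets A, B, X, Y, and let D1 and D2 be probability distributions on X and Y respectively. Define the probability distribution R on (A x X) x (B x Y) by R(a,x,b,y) := D1(x) * D2(y) * P(a,b|x,y). Then I(AX : BY)_R = I(A : B | X Y)_R = sum over (x,y) of D1(x) * D2(y) * I(A:B)_{P(.,.|x,y)}; in particular the non-signaling conditions imply I(X : B | Y)_R = 0 and I(A : Y | X)_R = 0. -/
/-- Conditional Shannon mutual information (base-2) `I(A:B|C)` of a joint distribution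
on `α × β × γ`, conditioning on the third coordinate:
`I(A:B|C) = H(A,C) + H(B,C) - H(A,B,C) - H(C)`. -/
noncomputable def condMutInfo {α β γ : Type} [Fintype α] [Fintype β] [Fintype γ]
    (R : α → β → γ → ℝ) : ℝ :=
  shannonEnt (fun p : α × γ => ∑ b, R p.1 b p.2) +
    shannonEnt (fun p : β × γ => ∑ a, R a p.1 p.2) -
    shannonEnt (fun p : α × β × γ => R p.1 p.2.1 p.2.2) -
    shannonEnt (fun c : γ => ∑ a, ∑ b, R a b c)

/-- A bipartite non-signaling device over finite output sets `A`, `B` and input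
sets `X`, `Y`. -/
def IsDevice {A B X Y : Type} [Fintype A] [Fintype B] (P : A → B → X → Y → ℝ) : Prop :=
  (∀ a b x y, 0 ≤ P a b x y) ∧
  (∀ x y, ∑ a, ∑ b, P a b x y = 1) ∧
  (∀ a x y y', ∑ b, P a b x y = ∑ b, P a b x y') ∧
  (∀ b y x x', ∑ a, P a b x y = ∑ a, P a b x' y)


theorem aux_mul_logb (x y : ℝ) :
    x * y * Real.logb 2 (x * y) = y * (x * Real.logb 2 x) + x * (y * Real.logb 2 y) := by
  by_cases hx : x = 0
  · simp [hx]
  by_cases hy : y = 0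
  · simp [hy]
  rw [Real.logb_mul hx hy]; ring

theorem aux_ent_equiv {α β : Type} [Fintype α] [Fintype β] (e : α ≃ β) (f : β → ℝ) (g : α → ℝ)
    (h : ∀ a, g a = f (e a)) : shannonEnt g = shannonEnt f := by
  unfold shannonEnt
  congr 1
  exact Fintype.sum_equiv e _ _ (fun a => by rw [h])

theorem aux_ent_chain {α γ : Type} [Fintype α] [Fintype γ] (w : γ → ℝ) (f : γ → α → ℝ)
    (hf : ∀ c, ∑ a, f c a = 1) :
    shannonEnt (fun p : α × γ => w p.2 * f p.2 p.1) =
      shannonEnt w + ∑ c, w c * shannonEnt (f c) := by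
  unfold shannonEnt
  rw [Fintype.sum_prod_type_right]
  simp only [aux_mul_logb, Finset.sum_add_distrib, mul_neg, Finset.sum_neg_distrib,
    ← Finset.sum_mul, ← Finset.mul_sum, hf, one_mul]
  ring

theorem aux_ent_prod {α γ δ : Type} [Fintype α] [Fintype γ] [Fintype δ] (e : δ ≃ α × γ)
    (u : α → ℝ) (w : γ → ℝ) (g : δ → ℝ) (hu : ∑ a, u a = 1) (hw : ∑ c, w c = 1)
    (h : ∀ d, g d = u (e d).1 * w (e d).2) : shannonEnt g = shannonEnt u + shannonEnt w := by
  rw [aux_ent_equiv e (fun p : α × γ => w p.2 * (fun _ => u) p.2 p.1) g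
    (fun a => by rw [h, mul_comm]), aux_ent_chain w (fun _ => u) (fun _ => hu),
    ← Finset.sum_mul, hw, one_mul, add_comm]

/-- Dice mutual-information identity: feeding independent local dice `D1`, `D2` into the
inputs of a non-signaling device `P` yields a joint distribution `R` on `(A×X) × (B×Y)`
with `I(AX:BY)_R = I(A:B|XY)_R = ∑_{x,y} D1(x) D2(y) I(A:B)_{P(·,·|x,y)}`; in particular
the non-signaling conditions imply `I(X:B|Y)_R = 0` and `I(A:Y|X)_R = 0`. -/
theorem dice_mutual_information_identity {A B X Y : Type}
    [Fintype A] [Fintype B] [Fintype X] [Fintype Y]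
    (P : A → B → X → Y → ℝ) (hP : IsDevice P)
    (D1 : X → ℝ) (hD1nonneg : ∀ x, 0 ≤ D1 x) (hD1sum : ∑ x, D1 x = 1)
    (D2 : Y → ℝ) (hD2nonneg : ∀ y, 0 ≤ D2 y) (hD2sum : ∑ y, D2 y = 1) :
    mutInfo (fun (p : A × X) (q : B × Y) => D1 p.2 * D2 q.2 * P p.1 q.1 p.2 q.2) =
        condMutInfo (fun a b (xy : X × Y) => D1 xy.1 * D2 xy.2 * P a b xy.1 xy.2) ∧
      condMutInfo (fun a b (xy : X × Y) => D1 xy.1 * D2 xy.2 * P a b xy.1 xy.2) =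
        ∑ x, ∑ y, D1 x * D2 y * mutInfo (fun a b => P a b x y) ∧
      condMutInfo (fun x b (y : Y) => ∑ a, D1 x * D2 y * P a b x y) = 0 ∧
      condMutInfo (fun a y (x : X) => ∑ b, D1 x * D2 y * P a b x y) = 0 := by
  obtain ⟨-, hsum, hA, hB⟩ := hP
  have hX : Nonempty X := by
    by_contra h
    rw [not_nonempty_iff] at h
    simp at hD1sum
  have hY : Nonempty Y := by
    by_contra h
    rw [not_nonempty_iff] at h
    simp at hD2sum
  obtain ⟨x0⟩ := hX
  obtain ⟨y0⟩ := hY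
  -- the local marginals
  obtain ⟨PA, hPA⟩ : ∃ PA : X → A → ℝ, ∀ a x y, ∑ b, P a b x y = PA x a :=
    ⟨fun x a => ∑ b, P a b x y0, fun a x y => hA a x y y0⟩
  obtain ⟨PB, hPB⟩ : ∃ PB : Y → B → ℝ, ∀ b x y, ∑ a, P a b x y = PB y b :=
    ⟨fun y b => ∑ a, P a b x0 y, fun b x y => hB b y x x0⟩
  have hPAs : ∀ x, ∑ a, PA x a = 1 := fun x => by
    rw [← hsum x y0]; exact Finset.sum_congr rfl (fun a _ => (hPA a x y0).symm)
  have hPBs : ∀ y, ∑ b, PB y b = 1 := fun y => by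
    rw [← hsum x0 y, Finset.sum_comm]; exact Finset.sum_congr rfl (fun b _ => (hPB b x0 y).symm)
  have hAXs : ∑ p : A × X, D1 p.2 * PA p.2 p.1 = 1 := by
    rw [Fintype.sum_prod_type_right]
    simp only [← Finset.mul_sum, hPAs, mul_one, hD1sum]
  have hBYs : ∑ p : B × Y, D2 p.2 * PB p.2 p.1 = 1 := by
    rw [Fintype.sum_prod_type_right]
    simp only [← Finset.mul_sum, hPBs, mul_one, hD2sum]
  have hXY : shannonEnt (fun p : X × Y => D1 p.1 * D2 p.2) = shannonEnt D1 + shannonEnt D2 :=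
    aux_ent_prod (Equiv.refl _) D1 D2 _ hD1sum hD2sum (fun _ => rfl)
  have hYX : shannonEnt (fun p : Y × X => D1 p.2 * D2 p.1) = shannonEnt D1 + shannonEnt D2 :=
    aux_ent_prod (Equiv.prodComm _ _) D1 D2 _ hD1sum hD2sum (fun _ => rfl)
  -- marginals of the two-party distribution
  have hm1 : ∀ (a : A) (x : X), ∑ q : B × Y, D1 x * D2 q.2 * P a q.1 x q.2 = D1 x * PA x a := by
    intro a x
    rw [Fintype.sum_prod_type_right]
    simp only [← Finset.mul_sum, hPA, ← Finset.sum_mul, hD2sum, mul_one]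
  have hm2 : ∀ (b : B) (y : Y), ∑ p : A × X, D1 p.2 * D2 y * P p.1 b p.2 y = D2 y * PB y b := by
    intro b y
    rw [Fintype.sum_prod_type_right]
    simp only [← Finset.mul_sum, hPB, ← Finset.sum_mul, hD1sum, one_mul]
  refine ⟨?_, ?_, ?_, ?_⟩
  · unfold mutInfo condMutInfo
    simp only [hm1, hm2, ← Finset.mul_sum, hPA, hPB, hsum, hPAs, mul_one, hXY]
    rw [aux_ent_equiv (⟨fun p => (p.1.1, p.2.1, p.1.2, p.2.2),
        fun p => ((p.1, p.2.2.1), (p.2.1, p.2.2.2)), fun _ => rfl, fun _ => rfl⟩ :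
          (A × X) × (B × Y) ≃ A × B × X × Y)
        (fun p : A × B × X × Y => D1 p.2.2.1 * D2 p.2.2.2 * P p.1 p.2.1 p.2.2.1 p.2.2.2)
        (fun p : (A × X) × (B × Y) => D1 p.1.2 * D2 p.2.2 * P p.1.1 p.2.1 p.1.2 p.2.2)
        (fun _ => rfl),
      aux_ent_prod (⟨fun p => ((p.1, p.2.1), p.2.2), fun p => (p.1.1, p.1.2, p.2),
          fun _ => rfl, fun _ => rfl⟩ : A × X × Y ≃ (A × X) × Y)
        (fun p : A × X => D1 p.2 * PA p.2 p.1) D2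
        (fun p : A × X × Y => D1 p.2.1 * D2 p.2.2 * PA p.2.1 p.1) hAXs hD2sum
        (fun _ => by simp only [Equiv.coe_fn_mk]; ring),
      aux_ent_prod (⟨fun p => ((p.1, p.2.2), p.2.1), fun p => (p.1.1, p.2, p.1.2),
          fun _ => rfl, fun _ => rfl⟩ : B × X × Y ≃ (B × Y) × X)
        (fun p : B × Y => D2 p.2 * PB p.2 p.1) D1
        (fun p : B × X × Y => D1 p.2.1 * D2 p.2.2 * PB p.2.2 p.1) hBYs hD1sum
        (fun _ => by simp only [Equiv.coe_fn_mk]; ring)]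
    ring
  · unfold mutInfo condMutInfo
    simp only [← Finset.mul_sum, hPA, hPB, hsum, hPAs, mul_one]
    have e1 := aux_ent_chain (fun p : X × Y => D1 p.1 * D2 p.2) (fun p => PA p.1)
      (fun c => hPAs c.1)
    have e2 := aux_ent_chain (fun p : X × Y => D1 p.1 * D2 p.2) (fun p => PB p.2)
      (fun c => hPBs c.2)
    have e3 := aux_ent_chain (fun p : X × Y => D1 p.1 * D2 p.2)
      (fun p (ab : A × B) => P ab.1 ab.2 p.1 p.2)
      (fun c => by rw [Fintype.sum_prod_type]; exact hsum c.1 c.2)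
    have e4 := aux_ent_equiv (Equiv.prodAssoc A B (X × Y)).symm
      (fun p : (A × B) × X × Y => D1 p.2.1 * D2 p.2.2 * P p.1.1 p.1.2 p.2.1 p.2.2)
      (fun p : A × B × X × Y => D1 p.2.2.1 * D2 p.2.2.2 * P p.1 p.2.1 p.2.2.1 p.2.2.2)
      (fun _ => rfl)
    rw [Fintype.sum_prod_type] at e1 e2 e3
    rw [e4, e1, e2, e3]
    simp only [mul_sub, mul_add, Finset.sum_add_distrib, Finset.sum_sub_distrib]
    ring
  · unfold condMutInfo
    simp only [← Finset.mul_sum, hPB, hPBs, ← Finset.sum_mul, hD1sum, one_mul, mul_one]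
    rw [aux_ent_prod (Equiv.refl _) D1 D2 (fun p : X × Y => D1 p.1 * D2 p.2) hD1sum hD2sum
        (fun _ => rfl),
      aux_ent_prod (Equiv.refl _) D1 (fun p : B × Y => D2 p.2 * PB p.2 p.1)
        (fun p : X × B × Y => D1 p.1 * D2 p.2.2 * PB p.2.2 p.2.1) hD1sum hBYs
        (fun _ => by simp only [Equiv.refl_apply]; ring)]
    ring
  · unfold condMutInfo
    simp only [← Finset.mul_sum, hPA, hPAs, ← Finset.sum_mul, hD2sum, mul_one]
    have h1 : ∀ (a : A) (x : X), ∑ y, D1 x * D2 y * PA x a = D1 x * PA x a := by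
      intro a x
      rw [← Finset.sum_mul, ← Finset.mul_sum, hD2sum, mul_one]
    have h2 : ∀ x, ∑ a, D1 x * PA x a = D1 x := by
      intro x
      rw [← Finset.mul_sum, hPAs, mul_one]
    have h3 := aux_ent_prod (⟨fun p => (p.2.1, (p.1, p.2.2)), fun p => (p.2.1, p.1, p.2.2),
          fun _ => rfl, fun _ => rfl⟩ : A × Y × X ≃ Y × (A × X)) D2
        (fun p : A × X => D1 p.2 * PA p.2 p.1)
        (fun p : A × Y × X => D1 p.2.2 * D2 p.2.1 * PA p.2.2 p.1) hD2sum hAXs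
        (fun _ => by simp only [Equiv.coe_fn_mk]; ring)
    simp only [hYX, h3]
    ring
end
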